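/- Rounding weights preserves near-optimality: let M > n² be the maximum edge weight of a DPVC instance with optimal value OPT ≥ M, and form a new instance with weights w'_{uv} = ⌊w_{uv}·n²/M⌋. Then the new optimal value OPT' satisfies OPT' ≤ n²·OPT/M, and any feasible solution SOL' of the new instance with SOL' ≤ ρ·OPT' (ρ ≥ 1) can be converted, by multiplying each vertex value by M/n² and adding M/n², into a feasible solution of the original instance with total power at most (ρ + 1/n)·OPT. -/

import Mathlib

/-!
Write `s = n² / M`. Scaling powers by `s` maps solutions of the original instance to solutions of
the rounded one, since rounding down only weakens the constraints; hence `OPT' ≤ s · OPT`. In the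
other direction a weight exceeds `s⁻¹` times its rounded value by at most `s⁻¹`, so undoing the
scaling and adding `s⁻¹` at each vertex restores feasibility. The total extra cost is
`n · s⁻¹ = M / n ≤ OPT / n`.
-/

namespace DPVC

variable {K V : Type*} [Field K] [LinearOrder K] {E : V → V → Prop} {w : V → V → K} {p q : V → K}
  {s : K}

/-- Feasible solutions of the DPVC instance with edge relation `E` and weights `w`: nonnegative
powers such that each edge is covered at one of its ends, where `w a b` is the power that `a` needs
to cover the edge between `a` and `b`. -/
structure IsFeasible (E : V → V → Prop) (w : V → V → K) (p : V → K) : Prop where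
  nonneg : ∀ x, 0 ≤ p x
  covers : ∀ a b, E a b → w a b ≤ p a ∨ w b a ≤ p b

/-- The weights scaled by `s` and rounded down to natural numbers (to `0` if negative), which are
the weights of the rounded instance. -/
def roundWeights [FloorSemiring K] (s : K) (w : V → V → K) (a b : V) : K :=
  ⌊w a b * s⌋₊

variable [IsStrictOrderedRing K]

section Rounding

variable [FloorSemiring K]

theorem roundWeights_natCast (N M : ℕ) (w : V → V → ℕ) :
    roundWeights ((N : K) / M) (fun a b ↦ (w a b : K)) =
      fun a b ↦ ((w a b * N / M : ℕ) : K) := by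
  ext a b
  rw [roundWeights, ← mul_div_assoc, ← Nat.cast_mul, Nat.floor_div_eq_div]

theorem roundWeights_le_mul (hs : 0 ≤ s) {a b : V} {c : K} (hc : 0 ≤ c) (hwc : w a b ≤ c) :
    roundWeights s w a b ≤ c * s :=
  calc (⌊w a b * s⌋₊ : K)
    _ ≤ ⌊c * s⌋₊ := by gcongr
    _ ≤ c * s := Nat.floor_le (mul_nonneg hc hs)

theorem le_mul_inv_add_inv_of_roundWeights_le (hs : 0 < s) {a b : V} {c : K}
    (hwc : roundWeights s w a b ≤ c) : w a b ≤ c * s⁻¹ + s⁻¹ := by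
  have hlt : w a b * s < roundWeights s w a b + 1 := Nat.lt_floor_add_one _
  rw [← add_one_mul, ← div_eq_mul_inv, le_div_iff₀ hs]
  linarith

theorem IsFeasible.roundWeights (hp : IsFeasible E w p) (hs : 0 ≤ s) :
    IsFeasible E (roundWeights s w) (fun x ↦ p x * s) where
  nonneg x := mul_nonneg (hp.nonneg x) hs
  covers a b hab := (hp.covers a b hab).imp
    (roundWeights_le_mul hs (hp.nonneg a)) (roundWeights_le_mul hs (hp.nonneg b))

theorem IsFeasible.of_roundWeights (hs : 0 < s) (hq : IsFeasible E (DPVC.roundWeights s w) q) :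
    IsFeasible E w (fun x ↦ q x * s⁻¹ + s⁻¹) where
  nonneg x := add_nonneg (mul_nonneg (hq.nonneg x) (inv_nonneg.2 hs.le)) (inv_nonneg.2 hs.le)
  covers a b hab := (hq.covers a b hab).imp
    (le_mul_inv_add_inv_of_roundWeights_le hs) (le_mul_inv_add_inv_of_roundWeights_le hs)

theorem IsFeasible.le_mul_sum_of_lowerBound_roundWeights [Fintype V] {L : K}
    (hp : IsFeasible E w p) (hs : 0 ≤ s)
    (hL : ∀ q, IsFeasible E (DPVC.roundWeights s w) q → L ≤ ∑ x, q x) :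
    L ≤ s * ∑ x, p x := by
  rw [mul_comm, Finset.sum_mul]
  exact hL _ (hp.roundWeights hs)

end Rounding

theorem sum_mul_inv_add_inv_le [Fintype V] {C L ρ : K} (hs : 0 < s) (hρ : 0 ≤ ρ)
    (hLC : L ≤ s * C) (hq : ∑ x, q x ≤ ρ * L) :
    ∑ x, (q x * s⁻¹ + s⁻¹) ≤ ρ * C + Fintype.card V * s⁻¹ :=
  calc ∑ x, (q x * s⁻¹ + s⁻¹)
    _ = (∑ x, q x) * s⁻¹ + Fintype.card V * s⁻¹ := by
      rw [Finset.sum_add_distrib, ← Finset.sum_mul, Finset.sum_const, Finset.card_univ,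
        nsmul_eq_mul]
    _ ≤ ρ * (s * C) * s⁻¹ + Fintype.card V * s⁻¹ := by
      gcongr
      exact hq.trans (by gcongr)
    _ = ρ * C + Fintype.card V * s⁻¹ := by field_simp

end DPVC

open DPVC in
theorem stmt_11_general {K V : Type*} [Field K] [LinearOrder K] [IsStrictOrderedRing K]
    [FloorSemiring K] [Fintype V] {E : V → V → Prop} {w : V → V → K} {p q : V → K} {M L ρ : K}
    (hp : IsFeasible E w p) (hM : 0 < M) (hMp : M ≤ ∑ x, p x)
    (hL : ∀ r, IsFeasible E (roundWeights ((Fintype.card V : K) ^ 2 / M) w) r → L ≤ ∑ x, r x)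
    (hρ : 0 ≤ ρ) (hq : IsFeasible E (roundWeights ((Fintype.card V : K) ^ 2 / M) w) q)
    (hqL : ∑ x, q x ≤ ρ * L) :
    L ≤ (Fintype.card V : K) ^ 2 * (∑ x, p x) / M ∧
    IsFeasible E w
      (fun x ↦ q x * (M / (Fintype.card V : K) ^ 2) + M / (Fintype.card V : K) ^ 2) ∧
    ∑ x, (q x * (M / (Fintype.card V : K) ^ 2) + M / (Fintype.card V : K) ^ 2) ≤
      (ρ + 1 / (Fintype.card V : K)) * ∑ x, p x := by
  obtain ⟨v, -, -⟩ := Finset.exists_ne_zero_of_sum_ne_zero (hM.trans_le hMp).ne'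
  have hcard : 0 < (Fintype.card V : K) := Nat.cast_pos.2 (Fintype.card_pos_iff.2 ⟨v⟩)
  have hs : 0 < (Fintype.card V : K) ^ 2 / M := by positivity
  have hLp := hp.le_mul_sum_of_lowerBound_roundWeights hs.le hL
  rw [← inv_div (_ ^ 2) M]
  refine ⟨hLp.trans_eq (div_mul_eq_mul_div _ _ _), hq.of_roundWeights hs, ?_⟩
  calc ∑ x, (q x * ((Fintype.card V : K) ^ 2 / M)⁻¹ + ((Fintype.card V : K) ^ 2 / M)⁻¹)
    _ ≤ ρ * ∑ x, p x + Fintype.card V * ((Fintype.card V : K) ^ 2 / M)⁻¹ :=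
      sum_mul_inv_add_inv_le hs hρ hLp hqL
    _ = ρ * ∑ x, p x + 1 / Fintype.card V * M := by field_simp
    _ ≤ ρ * ∑ x, p x + 1 / Fintype.card V * ∑ x, p x := by gcongr
    _ = (ρ + 1 / Fintype.card V) * ∑ x, p x := by ring

/-- Rounding weights preserves near-optimality: let `M > n²` bound the edge weights
of a DPVC instance with optimal value `OPT ≥ M`, and form the new instance with
weights `w' a b = ⌊w a b · n² / M⌋` (natural division is the floor). Then the new
optimal value satisfies `OPT' ≤ n²·OPT/M`, and any feasible solution `SOL'` of the
new instance with `∑ SOL' ≤ ρ·OPT'` (`ρ ≥ 1`) converts — by multiplying each vertex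
value by `M/n²` and adding `M/n²` — into a feasible solution of the original instance
of total power at most `(ρ + 1/n)·OPT`. -/
theorem stmt_11 {V : Type*} [Fintype V] (E : V → V → Prop)
    (w : V → V → ℕ)
    (hEsymm : ∀ a b, E a b → E b a)
    (hwpos : ∀ a b, E a b → 0 < w a b)
    (n : ℕ) (hn : n = Fintype.card V) (hn1 : 1 ≤ n)
    (M : ℕ) (hM : n ^ 2 < M) (hwM : ∀ a b, E a b → w a b ≤ M)
    (OPT : ℝ) (popt : V → ℝ)
    (hpopt0 : ∀ x, 0 ≤ popt x)
    (hpoptfeas : ∀ a b, E a b → (w a b : ℝ) ≤ popt a ∨ (w b a : ℝ) ≤ popt b)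
    (hpoptsum : ∑ x, popt x = OPT)
    (hoptmin : ∀ q : V → ℝ, (∀ x, 0 ≤ q x) →
      (∀ a b, E a b → (w a b : ℝ) ≤ q a ∨ (w b a : ℝ) ≤ q b) → OPT ≤ ∑ x, q x)
    (hOPTM : (M : ℝ) ≤ OPT)
    (OPT' : ℝ) (popt' : V → ℝ)
    (hpopt'0 : ∀ x, 0 ≤ popt' x)
    (hpopt'feas : ∀ a b, E a b →
      ((w a b * n ^ 2 / M : ℕ) : ℝ) ≤ popt' a ∨ ((w b a * n ^ 2 / M : ℕ) : ℝ) ≤ popt' b)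
    (hpopt'sum : ∑ x, popt' x = OPT')
    (hopt'min : ∀ q : V → ℝ, (∀ x, 0 ≤ q x) →
      (∀ a b, E a b →
        ((w a b * n ^ 2 / M : ℕ) : ℝ) ≤ q a ∨ ((w b a * n ^ 2 / M : ℕ) : ℝ) ≤ q b) →
      OPT' ≤ ∑ x, q x)
    (ρ : ℝ) (hρ : 1 ≤ ρ)
    (SOL' : V → ℝ)
    (hSOL'0 : ∀ x, 0 ≤ SOL' x)
    (hSOL'feas : ∀ a b, E a b →
      ((w a b * n ^ 2 / M : ℕ) : ℝ) ≤ SOL' a ∨ ((w b a * n ^ 2 / M : ℕ) : ℝ) ≤ SOL' b)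
    (hSOL' : ∑ x, SOL' x ≤ ρ * OPT') :
    OPT' ≤ (n : ℝ) ^ 2 * OPT / M ∧
    (∀ a b, E a b →
      (w a b : ℝ) ≤ SOL' a * ((M : ℝ) / (n : ℝ) ^ 2) + (M : ℝ) / (n : ℝ) ^ 2 ∨
      (w b a : ℝ) ≤ SOL' b * ((M : ℝ) / (n : ℝ) ^ 2) + (M : ℝ) / (n : ℝ) ^ 2) ∧
    ∑ x, (SOL' x * ((M : ℝ) / (n : ℝ) ^ 2) + (M : ℝ) / (n : ℝ) ^ 2) ≤
      (ρ + 1 / (n : ℝ)) * OPT := by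
  subst hn hpoptsum
  have hround := DPVC.roundWeights_natCast (K := ℝ) (Fintype.card V ^ 2) M w
  rw [Nat.cast_pow] at hround
  obtain ⟨hOPT', hfeas, hsum⟩ := stmt_11_general (L := OPT') ⟨hpopt0, hpoptfeas⟩
    (Nat.cast_pos.2 hM.pos) hOPTM (hround ▸ fun q hq ↦ hopt'min q hq.nonneg hq.covers)
    (zero_le_one.trans hρ) (hround ▸ ⟨hSOL'0, hSOL'feas⟩) hSOL'
  exact ⟨hOPT', hfeas.covers, hsum⟩
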